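/- Let Ã be a symmetric N×N real matrix, W an H×H real matrix, V an F×H real matrix, and X an N×F real matrix, and suppose K = ρ(Ã) · ‖W‖₂ < 1. Then the reservoir map Φ(M) = tanh(Ã M W + X V) has a unique fixed point H* ∈ ℝ^{N×H}, i.e., there exists exactly one N×H real matrix H* with Φ(H*) = H*. -/

import Mathlib

noncomputable def frobNorm {m n : Type*} [Fintype m] [Fintype n]
    (M : Matrix m n ℝ) : ℝ :=
  Real.sqrt (∑ i, ∑ j, (M i j) ^ 2)

noncomputable def specNorm {m n : ℕ} (M : Matrix (Fin m) (Fin n) ℝ) : ℝ :=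
  ‖LinearMap.toContinuousLinearMap (Matrix.toEuclideanLin M)‖

noncomputable def specRad {n : ℕ} (A : Matrix (Fin n) (Fin n) ℝ)
    (hA : A.IsHermitian) : ℝ :=
  ⨆ i, |hA.eigenvalues i|

noncomputable def mtanh {m n : Type*} (M : Matrix m n ℝ) : Matrix m n ℝ :=
  Matrix.of fun i j => Real.tanh (M i j)

noncomputable def resMap {N F Hd : ℕ} (Atil : Matrix (Fin N) (Fin N) ℝ)
    (W : Matrix (Fin Hd) (Fin Hd) ℝ) (V : Matrix (Fin F) (Fin Hd) ℝ)
    (X : Matrix (Fin N) (Fin F) ℝ) (M : Matrix (Fin N) (Fin Hd) ℝ) :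
    Matrix (Fin N) (Fin Hd) ℝ :=
  mtanh (Atil * M * W + X * V)

/-!
Left multiplication by `A` acts columnwise and right multiplication by `W` acts rowwise, so for the
Frobenius norm `M ↦ A * M * W + B` is Lipschitz with constant `‖A‖₂ * ‖W‖₂`. Entrywise application
of a Lipschitz function keeps its constant, `tanh` is `1`-Lipschitz, and `‖A‖₂` is the spectral
radius when `A` is Hermitian; Banach's fixed point theorem concludes.
-/

open Matrix WithLp
open scoped NNReal

theorem hasDerivAt_tanh (x : ℝ) : HasDerivAt Real.tanh (1 / Real.cosh x ^ 2) x := by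
  have hquot := (Real.hasDerivAt_sinh x).div (Real.hasDerivAt_cosh x) (Real.cosh_pos x).ne'
  have hnum : Real.cosh x * Real.cosh x - Real.sinh x * Real.sinh x = 1 := by
    simpa only [sq] using Real.cosh_sq_sub_sinh_sq x
  rw [hnum] at hquot
  exact hquot.congr_of_eventuallyEq (.of_forall Real.tanh_eq_sinh_div_cosh)

theorem lipschitzWith_one_tanh : LipschitzWith 1 Real.tanh := by
  refine lipschitzWith_of_nnnorm_deriv_le (fun x ↦ (hasDerivAt_tanh x).differentiableAt) fun x ↦ ?_
  rw [(hasDerivAt_tanh x).deriv, ← NNReal.coe_le_coe, coe_nnnorm, NNReal.coe_one,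
    Real.norm_of_nonneg (by positivity)]
  exact div_le_one_of_le₀ (one_le_pow₀ (Real.one_le_cosh x)) (by positivity)

section SpectralNorm

open scoped Matrix.Norms.L2Operator

theorem l2_opNorm_eq_iSup_abs_eigenvalues {𝕜 n : Type*} [RCLike 𝕜] [Fintype n] [DecidableEq n]
    {A : Matrix n n 𝕜} (hA : A.IsHermitian) : ‖A‖ = ⨆ i, |hA.eigenvalues i| := by
  have hdiag : ‖A‖ = ‖(RCLike.ofReal ∘ hA.eigenvalues : n → 𝕜)‖ := by
    conv_lhs => rw [hA.spectral_theorem, Unitary.conjStarAlgAut_apply, ← Unitary.coe_star,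
      CStarRing.norm_mul_coe_unitary, CStarRing.norm_coe_unitary_mul, l2_opNorm_diagonal]
  have hnonneg : 0 ≤ ⨆ i, |hA.eigenvalues i| := Real.iSup_nonneg fun _ ↦ abs_nonneg _
  rw [hdiag]
  refine le_antisymm ((pi_norm_le_iff_of_nonneg hnonneg).2 fun i ↦ ?_)
    (Real.iSup_le (fun i ↦ ?_) (norm_nonneg _))
  · simpa using le_ciSup (Set.finite_range fun i ↦ |hA.eigenvalues i|).bddAbove i
  · simpa using norm_le_pi_norm (RCLike.ofReal ∘ hA.eigenvalues : n → 𝕜) i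

end SpectralNorm

theorem specNorm_eq_specRad {n : ℕ} {A : Matrix (Fin n) (Fin n) ℝ} (hA : A.IsHermitian) :
    specNorm A = specRad A hA :=
  l2_opNorm_eq_iSup_abs_eigenvalues hA

section Frobenius

-- Matrices carry the Frobenius norm here, so the spectral norm of `A` is written as the norm of
-- the continuous linear map `A.toEuclideanLin.toContinuousLinearMap`.
open scoped Matrix.Norms.Frobenius

variable {l m n : Type*} [Fintype l] [Fintype m] [Fintype n]

theorem frobenius_norm_sq_eq_sum_sum_norm_sq {α : Type*} [SeminormedAddCommGroup α]
    (M : Matrix m n α) : ‖M‖ ^ 2 = ∑ i, ∑ j, ‖M i j‖ ^ 2 := by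
  simp_rw [← PiLp.norm_sq_eq_of_L2 _ (toLp 2 (M _))]
  exact PiLp.norm_sq_eq_of_L2 _ (toLp 2 fun i ↦ toLp 2 (M i))

theorem frobenius_norm_sq_eq_sum_norm_col_sq {α : Type*} [SeminormedAddCommGroup α]
    (M : Matrix m n α) : ‖M‖ ^ 2 = ∑ j, ‖toLp 2 (M.col j)‖ ^ 2 := by
  simp only [frobenius_norm_sq_eq_sum_sum_norm_sq, PiLp.norm_sq_eq_of_L2, col_apply]
  exact Finset.sum_comm

theorem lipschitzWith_frobenius_map {α β : Type*} [SeminormedAddCommGroup α]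
    [SeminormedAddCommGroup β] {L : ℝ≥0} {f : α → β} (hf : LipschitzWith L f) :
    LipschitzWith L fun M : Matrix m n α ↦ M.map f := by
  refine LipschitzWith.of_dist_le_mul fun P Q ↦ ?_
  rw [dist_eq_norm, dist_eq_norm, ← sq_le_sq₀ (norm_nonneg _) (by positivity), mul_pow]
  simp only [frobenius_norm_sq_eq_sum_sum_norm_sq, Finset.mul_sum, ← mul_pow]
  gcongr with i _ j _
  exact hf.norm_sub_le (P i j) (Q i j)

variable {𝕜 : Type*} [RCLike 𝕜]

theorem frobenius_norm_mul_le_opNorm_mul [DecidableEq m] (A : Matrix l m 𝕜) (M : Matrix m n 𝕜) :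
    ‖A * M‖ ≤ ‖A.toEuclideanLin.toContinuousLinearMap‖ * ‖M‖ := by
  rw [← sq_le_sq₀ (norm_nonneg _) (by positivity), mul_pow, frobenius_norm_sq_eq_sum_norm_col_sq,
    frobenius_norm_sq_eq_sum_norm_col_sq, Finset.mul_sum]
  refine Finset.sum_le_sum fun j _ ↦ ?_
  rw [← mul_pow]
  gcongr
  exact A.toEuclideanLin.toContinuousLinearMap.le_opNorm (toLp 2 (M.col j))

theorem frobenius_norm_mul_le_mul_opNorm [DecidableEq n]
    (M : Matrix l m 𝕜) (W : Matrix m n 𝕜) :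
    ‖M * W‖ ≤ ‖M‖ * ‖W.toEuclideanLin.toContinuousLinearMap‖ := by
  classical
  calc ‖M * W‖ = ‖Wᴴ * Mᴴ‖ := by rw [← conjTranspose_mul, frobenius_norm_conjTranspose]
    _ ≤ ‖Wᴴ.toEuclideanLin.toContinuousLinearMap‖ * ‖Mᴴ‖ := frobenius_norm_mul_le_opNorm_mul _ _
    _ = ‖W.toEuclideanLin.toContinuousLinearMap‖ * ‖M‖ := by
      rw [frobenius_norm_conjTranspose]
      exact congrArg (· * ‖M‖) (l2_opNorm_conjTranspose W)
    _ = ‖M‖ * ‖W.toEuclideanLin.toContinuousLinearMap‖ := mul_comm _ _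

theorem lipschitzWith_mul_mul_add {k : Type*} [Fintype k] [DecidableEq l] [DecidableEq n]
    (A : Matrix k l 𝕜) (W : Matrix m n 𝕜) (B : Matrix k n 𝕜) :
    LipschitzWith (‖A.toEuclideanLin.toContinuousLinearMap‖₊ *
      ‖W.toEuclideanLin.toContinuousLinearMap‖₊) fun M : Matrix l m 𝕜 ↦ A * M * W + B := by
  refine LipschitzWith.of_dist_le_mul fun P Q ↦ ?_
  calc dist (A * P * W + B) (A * Q * W + B) = ‖A * (P - Q) * W‖ := by
        rw [dist_add_right, dist_eq_norm, Matrix.mul_sub, Matrix.sub_mul]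
    _ ≤ ‖A.toEuclideanLin.toContinuousLinearMap‖ * ‖P - Q‖ *
          ‖W.toEuclideanLin.toContinuousLinearMap‖ :=
        (frobenius_norm_mul_le_mul_opNorm _ W).trans <| by
          gcongr
          exact frobenius_norm_mul_le_opNorm_mul A _
    _ = ‖A.toEuclideanLin.toContinuousLinearMap‖ *
          ‖W.toEuclideanLin.toContinuousLinearMap‖ * dist P Q := by
        rw [dist_eq_norm, mul_right_comm]

theorem reservoir_map_existsUnique_fixedPoint_general [DecidableEq m] [DecidableEq n]
    {L : ℝ≥0} {σ : 𝕜 → 𝕜} (hσ : LipschitzWith L σ)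
    (A : Matrix m m 𝕜) (W : Matrix n n 𝕜) (B : Matrix m n 𝕜)
    (hK : L * (‖A.toEuclideanLin.toContinuousLinearMap‖ *
      ‖W.toEuclideanLin.toContinuousLinearMap‖) < 1) :
    ∃! M : Matrix m n 𝕜, (A * M * W + B).map σ = M := by
  have hcontr : ContractingWith _ fun M : Matrix m n 𝕜 ↦ (A * M * W + B).map σ :=
    ⟨mod_cast hK, (lipschitzWith_frobenius_map hσ).comp (lipschitzWith_mul_mul_add A W B)⟩
  exact ⟨_, hcontr.fixedPoint_isFixedPt, fun _ hM ↦ hcontr.fixedPoint_unique hM⟩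

end Frobenius

/-- If K = ρ(Ã)·‖W‖₂ < 1 then the reservoir map has a unique fixed point. -/
theorem reservoir_map_existsUnique_fixedPoint {N F Hd : ℕ}
    (Atil : Matrix (Fin N) (Fin N) ℝ) (hA : Atil.IsHermitian)
    (W : Matrix (Fin Hd) (Fin Hd) ℝ) (V : Matrix (Fin F) (Fin Hd) ℝ)
    (X : Matrix (Fin N) (Fin F) ℝ)
    (hK : specRad Atil hA * specNorm W < 1) :
    ∃! Hstar : Matrix (Fin N) (Fin Hd) ℝ, resMap Atil W V X Hstar = Hstar := by
  rw [← specNorm_eq_specRad hA] at hK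
  exact reservoir_map_existsUnique_fixedPoint_general lipschitzWith_one_tanh Atil W (X * V)
    (by rwa [NNReal.coe_one, one_mul])
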